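/- For a proper nonempty subset A of {0,1}^n, the matrix inequality L ⪰ (1/|A|)·log₂(2^n/|A|)·J holds, where L is the matrix indexed by A with L(a,a) = n, L(a,b) = −1 if a ∼ b in the hypercube and 0 otherwise, and J is the all-ones matrix; i.e., L − (1/|A|)log₂(2^n/|A|)·J is positive semidefinite. -/

import Mathlib

open Finset

lemma two_point_alg (t k q U s r : ℝ) (ht : 0 < t) (hk : 0 ≤ k) (hq : 0 ≤ q)
    (hqt : q ≤ 1 - t) (hU : 2 * q ≤ U) :
    (s + r) ^ 2 / (1 + t) * (k + q) ≤ s ^ 2 * k + r ^ 2 / t * (k + U) + (s - r) ^ 2 := by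
  have h1 : (s + r) ^ 2 / (1 + t) * k ≤ (s ^ 2 + r ^ 2 / t) * k := by
    apply mul_le_mul_of_nonneg_right _ hk
    rw [div_le_iff₀ (by positivity)]
    have : (s ^ 2 + r ^ 2 / t) * (1 + t) - (s + r) ^ 2 = (t * s - r) ^ 2 / t := by
      field_simp; ring
    have : 0 ≤ (t * s - r) ^ 2 / t := by positivity
    linarith
  have h2 : r ^ 2 / t * (2 * q) ≤ r ^ 2 / t * U := by
    apply mul_le_mul_of_nonneg_left hU; positivity
  have h3 : (s + r) ^ 2 / (1 + t) * q ≤ r ^ 2 / t * (2 * q) + (s - r) ^ 2 := by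
    rcases hq.eq_or_lt with h0 | h0
    · subst h0; simp; positivity
    have ht1 : 0 < 1 - t := by linarith
    have e : r ^ 2 / t * (2 * q) + (s - r) ^ 2 - (s + r) ^ 2 / (1 + t) * q
        = (q * (2 * (t * s - r) ^ 2) / (t * (1 + t)) + (1 - t - q) * (s - r) ^ 2) / (1 - t) := by
      field_simp; ring
    have h5 : 0 ≤ 1 - t - q := by linarith
    have : 0 ≤ (q * (2 * (t * s - r) ^ 2) / (t * (1 + t)) + (1 - t - q) * (s - r) ^ 2) / (1 - t) := by
      positivity
    linarith
  nlinarith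

lemma two_point_pos (N a b s r : ℝ) (hb : 0 < b) (hba : b ≤ a) (haN : a ≤ N) :
    (s + r) ^ 2 / (a + b) * Real.logb 2 (2 * N / (a + b)) ≤
      s ^ 2 / a * Real.logb 2 (N / a) + r ^ 2 / b * Real.logb 2 (N / b) + (s - r) ^ 2 / a := by
  have ha : 0 < a := by linarith
  have hN : 0 < N := by linarith
  obtain ⟨t, rfl⟩ : ∃ t, b = a * t := ⟨b / a, by field_simp⟩
  have ht : 0 < t := by
    by_contra h; push Not at h; nlinarith
  have ht1 : t ≤ 1 := by
    by_contra h; push Not at h; nlinarith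
  set k := Real.logb 2 (N / a) with hkdef
  have hk : 0 ≤ k := Real.logb_nonneg (by norm_num) (by rw [le_div_iff₀ ha]; linarith)
  have e1 : Real.logb 2 (N / (a * t)) = k + (- Real.logb 2 t) := by
    rw [← div_div, Real.logb_div (by positivity) (by positivity)]; ring
  have e2 : Real.logb 2 (2 * N / (a + a * t)) = k + (1 - Real.logb 2 (1 + t)) := by
    have : 2 * N / (a + a * t) = (N / a) * (2 / (1 + t)) := by field_simp
    rw [this, Real.logb_mul (by positivity) (by positivity),
      Real.logb_div (x := 2) (by positivity) (by positivity), Real.logb_self_eq_one (by norm_num)]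
  have hW : t ≤ Real.logb 2 (1 + t) := by
    rw [Real.le_logb_iff_rpow_le (by norm_num) (by positivity)]
    have := rpow_one_add_le_one_add_mul_self (s := 1) (by norm_num) ht.le ht1
    norm_num at this
    exact this
  have hW1 : Real.logb 2 (1 + t) ≤ 1 := by
    rw [Real.logb_le_iff_le_rpow (by norm_num) (by positivity)]
    norm_num; linarith
  have hU : 2 * (1 - Real.logb 2 (1 + t)) ≤ - Real.logb 2 t := by
    have h : Real.logb 2 (4 * t) ≤ Real.logb 2 ((1 + t) ^ 2) :=
      Real.logb_le_logb_of_le (by norm_num) (by positivity) (by nlinarith [sq_nonneg (1 - t)])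
    have h4 : Real.logb 2 4 = 2 := by
      rw [Real.logb_eq_iff_rpow_eq (by norm_num) (by norm_num) (by norm_num)]; norm_num
    rw [Real.logb_mul (by norm_num) ht.ne', Real.logb_pow, h4] at h
    push_cast at h
    linarith
  rw [e1, e2]
  have := two_point_alg t k _ _ s r ht hk (by linarith) (by linarith) hU
  have h2 := div_le_div_of_nonneg_right this ha.le
  calc _ = (s + r) ^ 2 / (1 + t) * (k + (1 - Real.logb 2 (1 + t))) / a := by field_simp
    _ ≤ _ := h2
    _ = _ := by field_simp

lemma two_point (N a b s r P : ℝ) (hb : 0 ≤ b) (hba : b ≤ a) (haN : a ≤ N)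
    (hr : b = 0 → r = 0) (hP : (s - r) ^ 2 ≤ a * P) (hP0 : 0 ≤ P) :
    (s + r) ^ 2 / (a + b) * Real.logb 2 (2 * N / (a + b)) ≤
      s ^ 2 / a * Real.logb 2 (N / a) + r ^ 2 / b * Real.logb 2 (N / b) + P := by
  rcases (hb.trans hba).eq_or_lt with ha | ha
  · subst ha
    have : b = 0 := le_antisymm hba hb
    subst this
    simpa using hP0
  have hP' : (s - r) ^ 2 / a ≤ P := by rw [div_le_iff₀ ha]; linarith
  rcases hb.eq_or_lt with h | h
  · subst h
    have hN : 0 < N := by linarith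
    have hr0 := hr rfl
    subst hr0
    rw [add_zero, add_zero, mul_div_assoc, Real.logb_mul (by norm_num) (by positivity),
      Real.logb_self_eq_one (by norm_num)]
    simp only [sub_zero] at hP'
    simp
    linarith
  · have := two_point_pos N a b s r h hba haN
    linarith

/-- Dirichlet form of the cube, recursively. -/
def dir : (n : ℕ) → ((Fin n → Bool) → ℝ) → ℝ
  | 0, _ => 0
  | n + 1, f => dir n (fun x => f (Fin.cons false x)) + dir n (fun x => f (Fin.cons true x))
      + ∑ x : Fin n → Bool, (f (Fin.cons false x) - f (Fin.cons true x)) ^ 2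

lemma sum_cons {n : ℕ} (g : (Fin (n + 1) → Bool) → ℝ) :
    ∑ x, g x = ∑ x : Fin n → Bool, g (Fin.cons false x) + ∑ x : Fin n → Bool, g (Fin.cons true x) := by
  rw [← (Fin.consEquiv (fun _ => Bool)).sum_comp, Fintype.sum_prod_type, Fintype.sum_bool, add_comm]
  rfl

def Mc (n : ℕ) (x y : Fin n → Bool) : ℝ :=
  if x = y then (n : ℝ)
      else if (univ.filter fun i => x i ≠ y i).card = 1 then -1 else 0

lemma Mc_cons_same {n : ℕ} (b : Bool) (x y : Fin n → Bool) :
    Mc (n + 1) (Fin.cons b x) (Fin.cons b y) = Mc n x y + if x = y then 1 else 0 := by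
  unfold Mc
  rw [Fin.card_filter_univ_succ]
  by_cases h : x = y <;> simp [h, Fin.cons_inj]

lemma Mc_cons_diff {n : ℕ} (b c : Bool) (hbc : b ≠ c) (x y : Fin n → Bool) :
    Mc (n + 1) (Fin.cons b x) (Fin.cons c y) = - if x = y then 1 else 0 := by
  unfold Mc
  rw [Fin.card_filter_univ_succ]
  by_cases h : x = y
  · simp [h, Fin.cons_inj, hbc]
  · have : ∃ i, x i ≠ y i := by
      by_contra h'; push Not at h'; exact h (funext h')
    simp [h, Fin.cons_inj, hbc, Finset.filter_eq_empty_iff, this]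

lemma dir_eq (n : ℕ) (f : (Fin n → Bool) → ℝ) :
    dir n f = ∑ x, ∑ y, f x * Mc n x y * f y := by
  induction n with
  | zero => simp [dir, Mc]
  | succ n ih =>
    rw [dir, ih, ih, sum_cons]
    simp only [sum_cons (n := n), Mc_cons_same, Mc_cons_diff false true (by decide),
      Mc_cons_diff true false (by decide)]
    simp only [mul_add, add_mul, sum_add_distrib, mul_neg, neg_mul, sum_neg_distrib,
      mul_ite, ite_mul, mul_one, mul_zero, zero_mul, sum_ite_eq, mem_univ, if_true]
    have : ∀ x : Fin n → Bool, (f (Fin.cons false x) - f (Fin.cons true x)) ^ 2 =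
      f (Fin.cons false x) * f (Fin.cons false x) - f (Fin.cons false x) * f (Fin.cons true x)
       - f (Fin.cons true x) * f (Fin.cons false x) + f (Fin.cons true x) * f (Fin.cons true x) := by
      intro x; ring
    simp only [this, sum_add_distrib, sum_sub_distrib]
    ring

lemma penalty {V : Type*} [Fintype V] [DecidableEq V] (A : Finset V) (f g : V → ℝ)
    (hf : ∀ x, x ∉ A → f x = 0) (hg : ∀ x, 0 ≤ g x) (h : ∑ x, g x ≤ ∑ x, f x) :
    (∑ x, f x - ∑ x, g x) ^ 2 ≤ A.card * ∑ x, (f x - g x) ^ 2 := by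
  have h1 : ∑ x ∈ A, f x = ∑ x, f x :=
    sum_subset (subset_univ _) (fun x _ hx => hf x hx)
  have h2 : ∑ x ∈ A, g x ≤ ∑ x, g x :=
    sum_le_sum_of_subset_of_nonneg (subset_univ _) (fun x _ _ => hg x)
  have h3 : ∑ x, f x - ∑ x, g x ≤ ∑ x ∈ A, (f x - g x) := by
    rw [sum_sub_distrib]; linarith
  calc _ ≤ (∑ x ∈ A, (f x - g x)) ^ 2 := pow_le_pow_left₀ (by linarith) h3 2
    _ ≤ A.card * ∑ x ∈ A, (f x - g x) ^ 2 := sq_sum_le_card_mul_sum_sq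
    _ ≤ _ := by
      apply mul_le_mul_of_nonneg_left _ (by positivity)
      exact sum_le_sum_of_subset_of_nonneg (subset_univ _) (fun x _ _ => sq_nonneg _)

lemma key (n : ℕ) (A : Finset (Fin n → Bool)) (f : (Fin n → Bool) → ℝ)
    (h0 : ∀ x, 0 ≤ f x) (hf : ∀ x, x ∉ A → f x = 0) :
    (∑ x, f x) ^ 2 / A.card * Real.logb 2 (2 ^ n / A.card) ≤ dir n f := by
  induction n with
  | zero =>
    rcases A.eq_empty_or_nonempty with h | h
    · simp [h, dir]
    · have h1 : A.card = 1 := le_antisymm (by simpa using A.card_le_univ) h.card_pos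
      simp [h1, dir]
  | succ n ih =>
    set B : Bool → Finset (Fin n → Bool) := fun b => univ.filter fun x => (Fin.cons b x : Fin (n+1) → Bool) ∈ A with hB
    have hc : (A.card : ℝ) = (B false).card + (B true).card := by
      have : (A.card : ℝ) = ∑ x, if x ∈ A then (1 : ℝ) else 0 := by simp
      rw [this, sum_cons]
      simp [hB]
    have hfB : ∀ b x, x ∉ B b → f (Fin.cons b x) = 0 := fun b x hx =>
      hf _ (by simpa [hB] using hx)
    have i0 := ih (B false) (fun x => f (Fin.cons false x)) (fun x => h0 _) (hfB false)
    have i1 := ih (B true) (fun x => f (Fin.cons true x)) (fun x => h0 _) (hfB true)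
    have hN : ∀ b, ((B b).card : ℝ) ≤ 2 ^ n := by
      intro b
      have := (B b).card_le_univ
      simp at this
      exact_mod_cast this
    have hz : ∀ b, ((B b).card : ℝ) = 0 → ∑ x, f (Fin.cons b x) = 0 := by
      intro b hb
      have : B b = ∅ := by simpa using hb
      exact sum_eq_zero fun x _ => hfB b x (by simp [this])
    rw [dir, hc, sum_cons, pow_succ' (2 : ℝ) n]
    set s := ∑ x : Fin n → Bool, f (Fin.cons false x) with hs
    set r := ∑ x : Fin n → Bool, f (Fin.cons true x) with hr
    set P := ∑ x : Fin n → Bool, (f (Fin.cons false x) - f (Fin.cons true x)) ^ 2 with hPdef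
    have hP0 : 0 ≤ P := sum_nonneg fun x _ => sq_nonneg _
    have hP' : P = ∑ x : Fin n → Bool, (f (Fin.cons true x) - f (Fin.cons false x)) ^ 2 :=
      sum_congr rfl fun x _ => by ring
    have hP : (s - r) ^ 2 ≤ max ((B false).card : ℝ) (B true).card * P := by
      rcases le_total r s with h | h
      · refine (penalty (B false) _ _ (hfB false) (fun x => h0 _) h).trans ?_
        exact mul_le_mul_of_nonneg_right (le_max_left _ _) hP0
      · have := penalty (B true) _ _ (hfB true) (fun x => h0 _) h
        rw [← hP'] at this
        have h2 := mul_le_mul_of_nonneg_right (le_max_right ((B false).card : ℝ) (B true).card) hP0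
        nlinarith
    rcases le_total ((B true).card : ℝ) (B false).card with h | h
    · rw [max_eq_left h] at hP
      have := two_point (2 ^ n) _ _ s r P (by positivity) h (hN _) (hz true) hP hP0
      linarith
    · rw [max_eq_right h] at hP
      have := two_point (2 ^ n) _ _ r s P (by positivity) h (hN _) (hz false) (by linarith [sq_nonneg (s-r), show (r-s)^2=(s-r)^2 by ring]) hP0
      rw [add_comm r s, add_comm ((B true).card : ℝ)] at this
      linarith

lemma Mc_comm (n : ℕ) (x y : Fin n → Bool) : Mc n x y = Mc n y x := by
  unfold Mc
  simp only [eq_comm, ne_comm]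

lemma dir_abs (n : ℕ) (f : (Fin n → Bool) → ℝ) : dir n (fun x => |f x|) ≤ dir n f := by
  rw [dir_eq, dir_eq]
  refine sum_le_sum fun x _ => sum_le_sum fun y _ => ?_
  by_cases h : x = y
  · subst h
    have := abs_mul_abs_self (f x)
    apply le_of_eq
    linear_combination Mc n x x * this
  · have hM : Mc n x y ≤ 0 := by
      unfold Mc; rw [if_neg h]; split_ifs <;> norm_num
    have : f x * f y ≤ |f x| * |f y| := by rw [← abs_mul]; exact le_abs_self _
    nlinarith

lemma key' (n : ℕ) (A : Finset (Fin n → Bool)) (f : (Fin n → Bool) → ℝ)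
    (hf : ∀ x, x ∉ A → f x = 0) :
    (∑ x, f x) ^ 2 / A.card * Real.logb 2 (2 ^ n / A.card) ≤ dir n f := by
  have h1 := key n A (fun x => |f x|) (fun x => abs_nonneg _) (fun x hx => by simp [hf x hx])
  refine le_trans ?_ (h1.trans (dir_abs n f))
  rcases A.eq_empty_or_nonempty with h | h
  · simp [h]
  have hp : (0 : ℝ) < A.card := by exact_mod_cast h.card_pos
  have hN : (A.card : ℝ) ≤ 2 ^ n := by
    have := A.card_le_univ
    simp at this
    exact_mod_cast this
  have hl : 0 ≤ Real.logb 2 (2 ^ n / A.card) :=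
    Real.logb_nonneg (by norm_num) (by rw [le_div_iff₀ hp]; linarith)
  have : (∑ x, f x) ^ 2 ≤ (∑ x, |f x|) ^ 2 := by
    apply sq_le_sq'
    · have := abs_sum_le_sum_abs f univ
      linarith [neg_abs_le (∑ x, f x)]
    · exact (le_abs_self _).trans (abs_sum_le_sum_abs f univ)
  gcongr

/-- Matrix form of the isoperimetric inequality: for a proper nonempty subset `A` of
the cube, `L ⪰ (1/|A|)·log₂(2^n/|A|)·J`, where `L(a,a) = n`, `L(a,b) = -1` if `a ∼ b`
and `0` otherwise, and `J` is the all-ones matrix on `A`. -/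
theorem matrix_isoperimetric (n : ℕ) (A : Finset (Fin n → Bool))
    (hA : A.Nonempty) (hA' : A.card < 2 ^ n)
    (L : Matrix A A ℝ)
    (hL : ∀ a b : A, L a b =
      if a = b then (n : ℝ)
      else if (univ.filter fun i => (a : Fin n → Bool) i ≠ (b : Fin n → Bool) i).card = 1
      then -1 else 0) :
    (L - ((1 / (A.card : ℝ)) * Real.logb 2 ((2 : ℝ) ^ n / (A.card : ℝ))) •
        Matrix.of (fun _ _ : A => (1 : ℝ))).PosSemidef := by
  have hL' : ∀ a b : A, L a b = Mc n a b := by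
    intro a b
    rw [hL, Mc]; simp only [Subtype.ext_iff]
  set c := (1 / (A.card : ℝ)) * Real.logb 2 ((2 : ℝ) ^ n / (A.card : ℝ)) with hc
  refine Matrix.PosSemidef.of_dotProduct_mulVec_nonneg ?_ ?_
  · ext a b
    simp [hL', Mc_comm n a b]
  · intro v
    set f : (Fin n → Bool) → ℝ := fun x => if h : x ∈ A then v ⟨x, h⟩ else 0 with hfdef
    have hf : ∀ x, x ∉ A → f x = 0 := fun x hx => by simp [hfdef, hx]
    have hv : ∀ a : A, f a = v a := fun a => by simp [hfdef]
    have hk := key' n A f hf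
    have hsum : ∀ g : (Fin n → Bool) → ℝ, (∀ x, x ∉ A → g x = 0) → ∑ x, g x = ∑ a : A, g a := by
      intro g hg
      rw [← sum_subset (subset_univ A) (fun x _ hx => hg x hx), ← sum_coe_sort]
    have e1 : dir n f = ∑ a : A, ∑ b : A, v a * L a b * v b := by
      rw [dir_eq, hsum _ (fun x hx => by simp [hf x hx])]
      refine sum_congr rfl fun a _ => ?_
      rw [hsum _ (fun x hx => by simp [hf x hx])]
      exact sum_congr rfl fun b _ => by rw [hv, hv, hL']
    have e2 : ∑ x, f x = ∑ a : A, v a := by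
      rw [hsum _ hf]; exact sum_congr rfl fun a _ => hv a
    have e3 : star v ⬝ᵥ ((L - c • Matrix.of (fun _ _ : A => (1 : ℝ))).mulVec v)
        = dir n f - c * (∑ x, f x) ^ 2 := by
      rw [e1, e2, sq, sum_mul_sum, mul_sum, ← sum_sub_distrib]
      simp only [dotProduct, Matrix.mulVec, mul_sum]
      refine sum_congr rfl fun a _ => ?_
      rw [← sum_sub_distrib]
      refine sum_congr rfl fun b _ => ?_
      simp
      ring
    rw [e3, hc]
    have : (∑ x, f x) ^ 2 / A.card * Real.logb 2 (2 ^ n / A.card) =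
      1 / (A.card : ℝ) * Real.logb 2 (2 ^ n / A.card) * (∑ x, f x) ^ 2 := by ring
    linarith
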